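/- arXiv:1109.2860 — 2 statements merged into one kernel-verified Lean document; each statement's English description precedes it below -/
import Mathlib

section
/- Let n be an integer with n > 4 such that n is not divisible by 2 and not divisible by 3, and let ζ be a primitive n-th root of unity in the n-th cyclotomic field over ℚ. Then 1 − ζ + ζ² is a unit in the ring of integers of the n-th cyclotomic field. -/
open NumberField

/-!
Modulo `1 - ζ + ζ ^ 2`, a divisor of `ζ ^ 6 - 1`, both `ζ ^ 6` and `ζ ^ n` are `1`, hence so is `ζ`
because `6` and `n` are coprime. Then `1 - ζ + ζ ^ 2` is congruent to `1 - 1 + 1 ^ 2 = 1` modulo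
itself, which makes it a unit.
-/

section CommRing

variable {A : Type*} [CommRing A] {ζ : A} {m n : ℕ}

theorem pow_sub_one_dvd_sub_one_of_coprime (hζ : ζ ^ n = 1) (hmn : m.Coprime n) :
    ζ ^ m - 1 ∣ ζ - 1 := by
  obtain ⟨k, hk⟩ := exists_pow_eq_self_of_coprime
    (hmn.coprime_dvd_right (orderOf_dvd_of_pow_eq_one hζ))
  simpa only [hk] using sub_one_dvd_pow_sub_one (ζ ^ m) k

theorem isUnit_eval_of_dvd_X_pow_sub_one {p : Polynomial A} (hp : p ∣ .X ^ m - 1)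
    (hp_one : IsUnit (p.eval 1)) (hζ : ζ ^ n = 1) (hmn : m.Coprime n) :
    IsUnit (p.eval ζ) := by
  have eval_dvd_pow_sub_one : p.eval ζ ∣ ζ ^ m - 1 := by
    simpa using Polynomial.eval_dvd (x := ζ) hp
  have eval_dvd_sub : p.eval ζ ∣ p.eval ζ - p.eval 1 :=
    (eval_dvd_pow_sub_one.trans (pow_sub_one_dvd_sub_one_of_coprime hζ hmn)).trans
      (Polynomial.sub_dvd_eval_sub ζ 1 p)
  exact isUnit_of_dvd_unit ((dvd_sub_right dvd_rfl).mp eval_dvd_sub) hp_one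

theorem one_sub_zeta_add_zeta_sq_isUnit_general (hn : Nat.Coprime 6 n) (hζ : ζ ^ n = 1) :
    IsUnit (1 - ζ + ζ ^ 2) := by
  have dvd_X_pow_six_sub_one : (1 - .X + .X ^ 2 : Polynomial A) ∣ .X ^ 6 - 1 :=
    ⟨(.X ^ 2 - 1) * (1 + .X + .X ^ 2), by ring⟩
  simpa using isUnit_eval_of_dvd_X_pow_sub_one dvd_X_pow_six_sub_one (by simp) hζ hn

end CommRing

/-- Let `n > 4` be an integer not divisible by `2` or `3`, and let `ζ` be a
primitive `n`-th root of unity in the `n`-th cyclotomic field over `ℚ`.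
Then `1 - ζ + ζ^2` is a unit in the ring of integers. -/
theorem one_sub_zeta_add_zeta_sq_isUnit (n : ℕ+) (hn : 4 < (n : ℕ))
    (h2 : ¬ (2 ∣ (n : ℕ))) (h3 : ¬ (3 ∣ (n : ℕ)))
    (ζ : CyclotomicField n ℚ) (hζ : IsPrimitiveRoot ζ n) :
    ∃ u : (𝓞 (CyclotomicField n ℚ))ˣ,
      (algebraMap (𝓞 (CyclotomicField n ℚ)) (CyclotomicField n ℚ))
        (u : 𝓞 (CyclotomicField n ℚ)) = 1 - ζ + ζ ^ 2 := by
  have coprime_six : Nat.Coprime 6 n :=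
    Nat.Coprime.mul_left (Nat.prime_two.coprime_iff_not_dvd.mpr h2)
      (Nat.prime_three.coprime_iff_not_dvd.mpr h3)
  obtain ⟨u, hu⟩ := one_sub_zeta_add_zeta_sq_isUnit_general coprime_six
    hζ.toInteger_isPrimitiveRoot.pow_eq_one
  have algebraMap_toInteger : algebraMap _ _ hζ.toInteger = ζ := hζ.coe_toInteger
  exact ⟨u, by simp [hu, algebraMap_toInteger]⟩
end

section
/- Let p be a prime with p ≥ 5. Consider subsets S of ℤ/pℤ such that no two distinct elements of S are equal or adjacent, i.e., for all i, j in S with i ≠ j one has j ≠ i + 1 and j ≠ i − 1 (such a set S records the starting positions of a placement of non-overlapping dominos on a circle of length p). Then the number of such nonempty subsets S of even cardinality equals the number of such subsets S of odd cardinality. -/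
/-!
Let `I_G(x) = ∑ x ^ #t` over the independent sets `t` of `G`. Domino placements on a circle of
length `n` are the independent sets of the cycle `C_n`, so there are as many nonempty even ones as
odd ones exactly when `I_{C_n}(-1) = 1`, the `1` being the term of the empty set. Deleting a vertex
gives `I_{C_n}(x) = I_{P_{n-1}}(x) + x I_{P_{n-3}}(x)` and
`I_{P_n}(x) = I_{P_{n-1}}(x) + x I_{P_{n-2}}(x)`, where the path `P_n` is encoded as `range n` in
`hasse ℕ`. At `x = -1` the second recursion yields `I_{P_{n+3}} = -I_{P_n}`, so `I_{C_n}(-1)`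
depends only on `n` modulo `6`, and it is `1` exactly for `n ≡ ±1`.
-/

open Finset SimpleGraph

section IndepSum

variable {V W R : Type*} [Semiring R]

open Classical in
/-- The independence polynomial, evaluated at `x`, of the subgraph of `G` induced on `s`. Working
with a vertex set in a fixed graph avoids changing the vertex type when vertices are deleted. -/
noncomputable def indepSum (G : SimpleGraph V) (x : R) (s : Finset V) : R :=
  ∑ t ∈ s.powerset.filter fun t : Finset V ↦ G.IsIndepSet t, x ^ #t

lemma indepSum_eq_sum_ite (G : SimpleGraph V) [DecidablePred fun t : Finset V ↦ G.IsIndepSet t]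
    (x : R) (s : Finset V) :
    indepSum G x s = ∑ t ∈ s.powerset, if G.IsIndepSet (t : Set V) then x ^ #t else 0 := by
  rw [indepSum, sum_filter]
  congr!

@[simp]
lemma indepSum_empty (G : SimpleGraph V) (x : R) : indepSum G x ∅ = 1 := by
  simp [indepSum, sum_filter]

lemma isIndepSet_insert {G : SimpleGraph V} {v : V} {t : Set V} :
    G.IsIndepSet (insert v t) ↔ G.IsIndepSet t ∧ ∀ w ∈ t, ¬G.Adj v w := by
  rw [← isClique_compl, isClique_insert, isClique_compl]
  refine and_congr_right' (forall₂_congr fun w _ ↦ ?_)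
  rw [compl_adj]
  exact ⟨fun h hvw ↦ (h hvw.ne).2 hvw, fun h hne ↦ ⟨hne, h⟩⟩

lemma indepSum_insert [DecidableEq V] (G : SimpleGraph V) [DecidableRel G.Adj] (x : R) {v : V}
    {s : Finset V} (hv : v ∉ s) :
    indepSum G x (insert v s) = indepSum G x s + x * indepSum G x {w ∈ s | ¬G.Adj v w} := by
  have indep_iff (t : Finset V) : t ⊆ s ∧ G.IsIndepSet ↑(insert v t) ↔
      t ⊆ {w ∈ s | ¬G.Adj v w} ∧ G.IsIndepSet (t : Set V) := by
    rw [coe_insert, isIndepSet_insert]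
    simp only [subset_iff, mem_filter, mem_coe]
    grind
  have sum_insert_v : (∑ t ∈ s.powerset,
      if G.IsIndepSet ↑(insert v t) then x ^ #(insert v t) else 0) =
      x * indepSum G x {w ∈ s | ¬G.Adj v w} := by
    rw [indepSum_eq_sum_ite, ← sum_filter, ← sum_filter, mul_sum]
    refine sum_congr (by ext t; simpa using indep_iff t) fun t ht ↦ ?_
    have ht_sub : t ⊆ {w ∈ s | ¬G.Adj v w} := mem_powerset.1 (mem_filter.1 ht).1
    rw [card_insert_of_notMem fun h ↦ hv (mem_of_mem_filter v (ht_sub h)), pow_succ']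
  rw [indepSum_eq_sum_ite, sum_powerset_insert hv, sum_insert_v, ← indepSum_eq_sum_ite]

@[simp]
lemma indepSum_singleton (G : SimpleGraph V) (x : R) (v : V) : indepSum G x {v} = 1 + x := by
  classical
  rw [← insert_empty_eq, indepSum_insert G x (notMem_empty v)]
  simp

lemma indepSum_image [DecidableEq W] {G : SimpleGraph V} {H : SimpleGraph W} {f : V → W}
    (x : R) {s : Finset V} (hf : Set.InjOn f s)
    (hadj : ∀ v ∈ s, ∀ w ∈ s, H.Adj (f v) (f w) ↔ G.Adj v w) :
    indepSum H x (s.image f) = indepSum G x s := by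
  classical
  induction s using Finset.strongInduction with
  | H s ih =>
    obtain rfl | ⟨v, hv⟩ := s.eq_empty_or_nonempty
    · simp
    have ih_subset {t : Finset V} (ht : t ⊆ s.erase v) :
        indepSum H x (t.image f) = indepSum G x t := by
      have hts : t ⊆ s := ht.trans (erase_subset v s)
      exact ih t (ht.trans_ssubset (erase_ssubset hv)) (hf.mono (coe_subset.2 hts))
        fun a ha b hb ↦ hadj a (hts ha) b (hts hb)
    have hfv : f v ∉ (s.erase v).image f := by
      rw [mem_image]
      rintro ⟨w, hw, hwv⟩
      exact ne_of_mem_erase hw (hf (mem_of_mem_erase hw) hv hwv)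
    have hnbr : {w ∈ (s.erase v).image f | ¬H.Adj (f v) w} =
        {w ∈ s.erase v | ¬G.Adj v w}.image f := by
      rw [filter_image]
      congr 1
      exact filter_congr fun w hw ↦ not_congr (hadj v hv w (mem_of_mem_erase hw))
    rw [← insert_erase hv, image_insert, indepSum_insert H x hfv,
      indepSum_insert G x (notMem_erase v s), hnbr, ih_subset subset_rfl,
      ih_subset (filter_subset _ _)]

end IndepSum

section Parity

lemma sum_neg_one_pow_eq_card_even_sub_card_odd {ι R : Type*} [Ring R] (s : Finset ι)
    (f : ι → ℕ) :
    ∑ i ∈ s, (-1 : R) ^ f i = #{i ∈ s | Even (f i)} - #{i ∈ s | Odd (f i)} := by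
  have hterm (i : ι) :
      (-1 : R) ^ f i = (if Even (f i) then 1 else 0) - (if Odd (f i) then 1 else 0) := by
    obtain h | h := Nat.even_or_odd (f i)
    · simp [h, Nat.not_odd_iff_even.2 h]
    · simp [h, Nat.not_even_iff_odd.2 h]
  simp only [hterm, sum_sub_distrib, sum_boole]

lemma card_even_indepSet_eq_card_odd_iff {V : Type*} [Fintype V] (G : SimpleGraph V) :
    Nat.card {S : Finset V // G.IsIndepSet (S : Set V) ∧ S.Nonempty ∧ Even #S} =
        Nat.card {S : Finset V // G.IsIndepSet (S : Set V) ∧ Odd #S} ↔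
      indepSum G (-1 : ℤ) univ = 1 := by
  classical
  have hempty : (univ.filter fun t : Finset V ↦ G.IsIndepSet t ∧ Even #t) =
      insert ∅ (univ.filter fun t : Finset V ↦ G.IsIndepSet t ∧ t.Nonempty ∧ Even #t) := by
    ext t
    obtain rfl | ht := t.eq_empty_or_nonempty
    · simp
    · simp [ht, ht.ne_empty]
  rw [indepSum, sum_neg_one_pow_eq_card_even_sub_card_odd, powerset_univ, filter_filter,
    filter_filter, hempty, card_insert_of_notMem (by simp)]
  simp only [Nat.card_eq_fintype_card, Fintype.card_subtype]
  omega

end Parity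

section Path

variable {R : Type*}

lemma indepSum_hasse_range_add_two [Semiring R] (x : R) (n : ℕ) :
    indepSum (hasse ℕ) x (range (n + 2)) =
      indepSum (hasse ℕ) x (range (n + 1)) + x * indepSum (hasse ℕ) x (range n) := by
  classical
  have hnonadj : {i ∈ range (n + 1) | ¬(hasse ℕ).Adj (n + 1) i} = range n := by
    ext i
    simp only [mem_filter, mem_range, hasse_adj, Nat.covBy_iff_add_one_eq]
    omega
  rw [range_add_one, indepSum_insert _ _ notMem_range_self, hnonadj]

lemma antiperiodic_indepSum_hasse_range [Ring R] :
    Function.Antiperiodic (fun n ↦ indepSum (hasse ℕ) (-1 : R) (range n)) 3 := by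
  intro n
  simp only [indepSum_hasse_range_add_two]
  noncomm_ring

lemma indepSum_hasse_Ico_add [Semiring R] (x : R) (m n : ℕ) :
    indepSum (hasse ℕ) x (Ico m (m + n)) = indepSum (hasse ℕ) x (range n) := by
  have hIco : Ico m (m + n) = (range n).image (m + ·) := by
    rw [range_eq_Ico, image_add_left_Ico, add_zero]
  rw [hIco]
  refine indepSum_image x (add_right_injective m).injOn fun i _ j _ ↦ ?_
  simp only [hasse_adj, Nat.covBy_iff_add_one_eq]
  omega

lemma indepSum_hasse_range_add_neg_eq_one_iff (n : ℕ) :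
    indepSum (hasse ℕ) (-1 : ℤ) (range (n + 2)) + -1 * indepSum (hasse ℕ) (-1) (range n) = 1 ↔
      Nat.Coprime 6 (n + 3) := by
  have path_periodic : Function.Periodic (fun n ↦ indepSum (hasse ℕ) (-1 : ℤ) (range n)) (2 * 3) :=
    antiperiodic_indepSum_hasse_range.periodic_two_mul
  have periodic : Function.Periodic (fun n ↦
      (indepSum (hasse ℕ) (-1 : ℤ) (range (n + 2)) + -1 * indepSum (hasse ℕ) (-1) (range n) = 1 ↔
        Nat.Coprime 6 (n + 3))) 6 := fun n ↦ by
    have h0 := path_periodic n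
    have h2 := path_periodic (n + 2)
    have h3 := Nat.periodic_coprime 6 (n + 3)
    simp only [add_right_comm n _ 6, Nat.reduceMul] at h0 h2 h3 ⊢
    rw [h0, h2, h3]
  have hmod : n % 6 < 6 := Nat.mod_lt n (by norm_num)
  refine (periodic.map_mod_nat n).mp ?_
  generalize n % 6 = r at hmod
  interval_cases r <;> norm_num [indepSum_hasse_range_add_two]

end Path

section Cycle

variable {R : Type*} [Semiring R]

lemma isIndepSet_circulantGraph_one_iff {A : Type*} [AddCommGroupWithOne A] {S : Set A} :
    (circulantGraph {1}).IsIndepSet S ↔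
      ∀ i ∈ S, ∀ j ∈ S, i ≠ j → j ≠ i + 1 ∧ j ≠ i - 1 := by
  refine forall₄_congr fun i _ j _ ↦ forall_congr' fun hij ↦ ?_
  simp only [circulantGraph_adj, Set.mem_singleton_iff]
  grind

lemma circulantGraph_one_adj_natCast_iff {N i j : ℕ} (hN : 2 ≤ N) (hi : i < N) (hj : j < N) :
    (circulantGraph ({1} : Set (ZMod N))).Adj i j ↔
      (hasse ℕ).Adj i j ∨ i = 0 ∧ j + 1 = N ∨ j = 0 ∧ i + 1 = N := by
  have sub_eq_one {a b : ℕ} (ha : a < N) (hb : b < N) :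
      (a - b : ZMod N) = 1 ↔ b + 1 = a ∨ a = 0 ∧ b + 1 = N := by
    rw [sub_eq_iff_eq_add', ← Nat.cast_succ, ZMod.natCast_eq_natCast_iff', Nat.mod_eq_of_lt ha]
    obtain hb' | hb' := (Nat.succ_le_of_lt hb).lt_or_eq
    · rw [Nat.mod_eq_of_lt hb']
      omega
    · rw [hb', Nat.mod_self]
      omega
  have natCast_inj : (i : ZMod N) = j ↔ i = j :=
    (CharP.natCast_injOn_Iio (ZMod N) N).eq_iff hi hj
  simp only [circulantGraph_adj, Set.mem_singleton_iff, sub_eq_one hi hj, sub_eq_one hj hi,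
    natCast_inj, hasse_adj, Nat.covBy_iff_add_one_eq]
  omega

lemma indepSum_circulantGraph_one_image_natCast (x : R) {n : ℕ} {s : Finset ℕ}
    (hs : s ⊆ range n) :
    indepSum (circulantGraph {1}) x (s.image ((↑) : ℕ → ZMod (n + 1))) =
      indepSum (hasse ℕ) x s := by
  have hlt {i : ℕ} (hi : i ∈ s) : i < n := mem_range.1 (hs hi)
  refine indepSum_image x ?_ fun i hi j hj ↦ ?_
  · exact (CharP.natCast_injOn_Iio (ZMod (n + 1)) (n + 1)).mono
      fun i hi ↦ (hlt hi).trans n.lt_succ_self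
  · have hi := hlt hi
    have hj := hlt hj
    rw [circulantGraph_one_adj_natCast_iff (by omega) (by omega) (by omega)]
    exact or_iff_left (by omega)

lemma indepSum_circulantGraph_one_univ (x : R) (n : ℕ) :
    indepSum (circulantGraph ({1} : Set (ZMod (n + 3)))) x univ =
      indepSum (hasse ℕ) x (range (n + 2)) + x * indepSum (hasse ℕ) x (range n) := by
  have univ_eq : (univ : Finset (ZMod (n + 3))) =
      insert ((n + 2 : ℕ) : ZMod (n + 3)) ((range (n + 2)).image (↑)) := by
    rw [← image_insert, ← range_add_one, eq_comm, eq_univ_iff_forall]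
    exact fun a ↦ mem_image.2 ⟨a.val, mem_range.2 a.val_lt, a.natCast_zmod_val⟩
  have last_notMem : ((n + 2 : ℕ) : ZMod (n + 3)) ∉ (range (n + 2)).image (↑) := by
    rw [mem_image]
    rintro ⟨i, hi, hcast⟩
    rw [mem_range] at hi
    exact hi.ne (CharP.natCast_injOn_Iio _ (n + 3) (hi.trans (by omega)) (by simp) hcast)
  have adj_last {i : ℕ} (hi : i < n + 2) :
      (circulantGraph {1}).Adj ((n + 2 : ℕ) : ZMod (n + 3)) i ↔ i = 0 ∨ i = n + 1 := by
    rw [circulantGraph_one_adj_natCast_iff (by omega) (by omega) (by omega), hasse_adj,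
      Nat.covBy_iff_add_one_eq, Nat.covBy_iff_add_one_eq]
    omega
  have nonadj_last : ((range (n + 2)).filter fun i : ℕ ↦
      ¬(circulantGraph {1}).Adj ((n + 2 : ℕ) : ZMod (n + 3)) i) = Ico 1 (1 + n) := by
    ext i
    simp only [mem_filter, mem_range, mem_Ico]
    constructor
    · rintro ⟨hi, hadj⟩
      rw [adj_last hi] at hadj
      omega
    · intro hi
      rw [adj_last (by omega)]
      omega
  rw [univ_eq, indepSum_insert _ _ last_notMem, filter_image, nonadj_last,
    indepSum_circulantGraph_one_image_natCast x subset_rfl,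
    indepSum_circulantGraph_one_image_natCast x (by grind), indepSum_hasse_Ico_add]

end Cycle

theorem card_even_domino_placements_eq_card_odd_general (p : ℕ) (hp : 3 ≤ p) :
    Nat.card {S : Finset (ZMod p) //
        (∀ i ∈ S, ∀ j ∈ S, i ≠ j → j ≠ i + 1 ∧ j ≠ i - 1) ∧
        S.Nonempty ∧ Even S.card}
      = Nat.card {S : Finset (ZMod p) //
        (∀ i ∈ S, ∀ j ∈ S, i ≠ j → j ≠ i + 1 ∧ j ≠ i - 1) ∧
        Odd S.card} ↔ p.Coprime 6 := by
  obtain ⟨n, rfl⟩ := Nat.exists_eq_add_of_le' hp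
  have h := card_even_indepSet_eq_card_odd_iff (circulantGraph ({1} : Set (ZMod (n + 3))))
  simp only [isIndepSet_circulantGraph_one_iff, mem_coe] at h
  rw [h, indepSum_circulantGraph_one_univ, indepSum_hasse_range_add_neg_eq_one_iff,
    Nat.coprime_comm]

/-- Let `p ≥ 5` be a prime.  Among subsets `S` of `ℤ/pℤ` in which no two
distinct elements are adjacent (domino placements on a circle of length `p`),
the number of nonempty such subsets of even cardinality equals the number of
such subsets of odd cardinality. -/
theorem card_even_domino_placements_eq_card_odd (p : ℕ) (hp : p.Prime)
    (hp5 : 5 ≤ p) :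
    Nat.card {S : Finset (ZMod p) //
        (∀ i ∈ S, ∀ j ∈ S, i ≠ j → j ≠ i + 1 ∧ j ≠ i - 1) ∧
        S.Nonempty ∧ Even S.card}
      = Nat.card {S : Finset (ZMod p) //
        (∀ i ∈ S, ∀ j ∈ S, i ≠ j → j ≠ i + 1 ∧ j ≠ i - 1) ∧
        Odd S.card} :=
  (card_even_domino_placements_eq_card_odd_general p (by omega)).2 <|
    Nat.Coprime.mul_right ((Nat.coprime_primes hp Nat.prime_two).2 (by omega))
      ((Nat.coprime_primes hp Nat.prime_three).2 (by omega))
end
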